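/- Let alpha, beta, nu, d, c1, c4, c6, xi0 > 0 satisfy alpha*d = 2*beta*nu, let T >= 2 be an integer, and let 0 < epsilon < e^{-1} with epsilon <= 2*c1*xi0^alpha*T^{-alpha}. Set L = ceil( log(2*c1*xi0^alpha*epsilon^{-1}) / (alpha*log T) ) and n_l = ceil( (2*L*epsilon^{-1}*c6)^{d/nu} * xi_l^{beta} ) for l = 1, ..., L. Then c4 * sum_{l=1}^{L} n_l * xi_l^{-beta} <= c5 * epsilon^{-d/nu} * (log(epsilon^{-1}))^{1 + d/nu}, where c5 = c4*(2*c6)^{d/nu}*c7^{1+d/nu} + c4*2^{beta/alpha}*c1^{beta/alpha}*T^{beta}*(1 - T^{-beta})^{-1} and c7 = 1/(alpha*log T) + max(0, log(2*c1*xi0^alpha)/(alpha*log T)) + 1. -/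

import Mathlib

/-!
Rounding up to an integer splits the cost of level `l` into `A = (2 * L * eps⁻¹ * c6) ^ (d / nu)`,
which is the same on every level, and at most one extra run of cost `xi_l ^ (-beta)`. The first
part adds up to `L * A`, of order `L ^ (1 + d / nu) * eps ^ (-(d / nu))`, and `L` grows like
`log eps⁻¹`. The extra runs form a geometric sum, controlled by `xi_L ^ (-beta)`; since `L` is the
least level with `2 * c1 * xi_L ^ alpha ≤ eps`, the level before it satisfies
`eps < 2 * c1 * xi_(L-1) ^ alpha`, so this sum is of order `eps ^ (-(beta / alpha))`, which is
dominated by `eps ^ (-(d / nu))` because `beta / alpha ≤ d / nu`.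
-/

theorem sum_Icc_zpow_le {K : Type*} [Field K] [LinearOrder K] [IsStrictOrderedRing K] {q : K}
    (hq : 1 < q) (m L : ℤ) :
    ∑ l ∈ Finset.Icc m L, q ^ l ≤ q ^ L * (1 - q⁻¹)⁻¹ := by
  have hq0 : 0 < q := zero_lt_one.trans hq
  have hgap : 0 < 1 - q⁻¹ := sub_pos.2 (inv_lt_one_of_one_lt₀ hq)
  have hempty {k : ℤ} (hk : k < m) : ∑ l ∈ Finset.Icc m k, q ^ l ≤ q ^ k * (1 - q⁻¹)⁻¹ := by
    rw [Finset.Icc_eq_empty_of_lt hk, Finset.sum_empty]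
    positivity
  rcases lt_or_ge L (m - 1) with hL | hL
  · exact hempty (by lia)
  induction L, hL using Int.leInduction with
  | base => exact hempty (by lia)
  | succ k hk ih =>
    have htop : Finset.Icc m (k + 1) = insert (k + 1) (Finset.Icc m k) :=
      (Finset.insert_Icc_right_eq_Icc_add_one (by lia)).symm
    rw [htop, Finset.sum_insert (by simp)]
    calc q ^ (k + 1) + ∑ l ∈ Finset.Icc m k, q ^ l
        ≤ q ^ (k + 1) + q ^ k * (1 - q⁻¹)⁻¹ := by gcongr
      _ = q ^ (k + 1) * (1 - q⁻¹)⁻¹ := by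
        rw [zpow_add_one₀ hq0.ne']
        field_simp
        ring

theorem ceil_mul_rpow_mul_rpow_neg_le {x : ℝ} (hx : 0 < x) (A s : ℝ) :
    (⌈A * x ^ s⌉ : ℝ) * x ^ (-s) ≤ A + x ^ (-s) := by
  calc (⌈A * x ^ s⌉ : ℝ) * x ^ (-s)
      ≤ (A * x ^ s + 1) * x ^ (-s) := by
        gcongr
        exact (Int.ceil_lt_add_one _).le
    _ = A + x ^ (-s) := by
        rw [add_mul, one_mul, mul_assoc, ← Real.rpow_add hx, add_neg_cancel, Real.rpow_zero,
          mul_one]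

theorem sum_Icc_one_mul_rpow_le {a p X : ℝ} {L : ℤ} (ha : 0 ≤ a) (hp : 0 ≤ p) (hX : 0 ≤ X)
    (hLX : (L : ℝ) ≤ X) :
    ∑ _l ∈ Finset.Icc 1 L, (a * L) ^ p ≤ a ^ p * X ^ (1 + p) := by
  rcases le_or_gt L 0 with hL | hL
  · rw [Finset.Icc_eq_empty (by lia), Finset.sum_empty]
    positivity
  have hL' : (0 : ℝ) < L := by exact_mod_cast hL
  have hcard : ((Finset.Icc 1 L).card : ℝ) = L := by
    rw [Int.card_Icc, add_sub_cancel_right]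
    exact_mod_cast Int.toNat_of_nonneg hL.le
  calc ∑ _l ∈ Finset.Icc 1 L, (a * L) ^ p
      = L * (a * L) ^ p := by rw [Finset.sum_const, nsmul_eq_mul, hcard]
    _ = a ^ p * (L : ℝ) ^ (1 + p) := by
        rw [Real.mul_rpow ha hL'.le, Real.rpow_add hL', Real.rpow_one]
        ring
    _ ≤ a ^ p * X ^ (1 + p) := by gcongr

theorem one_le_log_inv {eps : ℝ} (heps : 0 < eps) (heps1 : eps ≤ Real.exp (-1)) :
    1 ≤ Real.log eps⁻¹ := by
  rw [Real.log_inv]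
  linarith [(Real.log_le_iff_le_exp heps).2 heps1]

theorem rpow_neg_le_rpow_neg_mul_log_inv_rpow {eps p q s : ℝ} (heps : 0 < eps)
    (heps1 : eps ≤ Real.exp (-1)) (hqp : q ≤ p) (hs : 0 ≤ s) :
    eps ^ (-q) ≤ eps ^ (-p) * Real.log eps⁻¹ ^ s := by
  have heps_le_one : eps ≤ 1 := heps1.trans (Real.exp_le_one_iff.2 (by norm_num))
  calc eps ^ (-q) ≤ eps ^ (-p) :=
        Real.rpow_le_rpow_of_exponent_ge heps heps_le_one (neg_le_neg hqp)
    _ ≤ eps ^ (-p) * Real.log eps⁻¹ ^ s :=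
        le_mul_of_one_le_right (by positivity) (Real.one_le_rpow (one_le_log_inv heps heps1) hs)

theorem inv_one_sub_rpow_neg_nonneg {t s : ℝ} (ht : 1 ≤ t) (hs : 0 ≤ s) :
    0 ≤ (1 - t ^ (-s))⁻¹ :=
  inv_nonneg.2 (sub_nonneg.2 (Real.rpow_le_one_of_one_le_of_nonpos ht (neg_nonpos.2 hs)))

/-- The fidelity parameter `xi_l = xi0 * T ^ (-l)` of level `l`. The exponent is real, so this is
intended for `0 < T`. -/
noncomputable def fidelity (xi0 T : ℝ) (l : ℤ) : ℝ :=
  xi0 * T ^ (-(l : ℝ))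

/-- The number of fidelity levels needed when the error at level `l` is `c * xi_l ^ alpha` and the
tolerance is `eps`. The paper's `L` is the case `c = 2 * c1`. -/
noncomputable def levelCount (alpha c xi0 T eps : ℝ) : ℤ :=
  ⌈Real.log (c * xi0 ^ alpha * eps⁻¹) / (alpha * Real.log T)⌉

section Fidelity

variable {xi0 T : ℝ}

theorem fidelity_pos (hxi0 : 0 < xi0) (hT : 0 < T) (l : ℤ) : 0 < fidelity xi0 T l :=
  mul_pos hxi0 (Real.rpow_pos_of_pos hT _)

theorem fidelity_rpow (hxi0 : 0 ≤ xi0) (hT : 0 ≤ T) (l : ℤ) (s : ℝ) :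
    fidelity xi0 T l ^ s = xi0 ^ s * (T ^ (-s)) ^ l := by
  rw [fidelity, Real.mul_rpow hxi0 (by positivity), ← Real.rpow_mul hT, ← Real.rpow_intCast,
    ← Real.rpow_mul hT]
  ring_nf

theorem fidelity_rpow_neg_eq_mul_sub_one (hxi0 : 0 ≤ xi0) (hT : 0 < T) (l : ℤ) (s : ℝ) :
    fidelity xi0 T l ^ (-s) = T ^ s * fidelity xi0 T (l - 1) ^ (-s) := by
  have hTs : T ^ s ≠ 0 := (Real.rpow_pos_of_pos hT s).ne'
  rw [fidelity_rpow hxi0 hT.le, fidelity_rpow hxi0 hT.le, neg_neg, zpow_sub_one₀ hTs]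
  field_simp

theorem sum_fidelity_rpow_neg_le {beta : ℝ} (hxi0 : 0 ≤ xi0) (hT : 1 < T) (hbeta : 0 < beta)
    (m L : ℤ) :
    ∑ l ∈ Finset.Icc m L, fidelity xi0 T l ^ (-beta) ≤
      fidelity xi0 T L ^ (-beta) * (1 - T ^ (-beta))⁻¹ := by
  have hT0 : 0 ≤ T := by linarith
  simp only [fidelity_rpow hxi0 hT0, neg_neg]
  rw [← Finset.mul_sum, mul_assoc, Real.rpow_neg hT0 beta]
  gcongr
  exact sum_Icc_zpow_le (Real.one_lt_rpow hT hbeta) m L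

end Fidelity

section LevelCount

variable {alpha c xi0 T eps : ℝ}

theorem levelCount_le_iff (halpha : 0 < alpha) (hc : 0 < c) (hxi0 : 0 < xi0) (hT : 1 < T)
    (heps : 0 < eps) {l : ℤ} :
    levelCount alpha c xi0 T eps ≤ l ↔ c * fidelity xi0 T l ^ alpha ≤ eps := by
  have hT0 : 0 < T := by linarith
  have hTl : 0 < (T ^ alpha) ^ l := by positivity
  have hlog : (l : ℝ) * (alpha * Real.log T) = Real.log ((T ^ alpha) ^ l) := by
    rw [Real.log_zpow, Real.log_rpow hT0]
  rw [levelCount, Int.ceil_le, div_le_iff₀ (mul_pos halpha (Real.log_pos hT)), hlog,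
    Real.log_le_log_iff (by positivity) hTl, fidelity_rpow hxi0.le hT0.le, Real.rpow_neg hT0.le,
    inv_zpow, ← mul_assoc, mul_inv_le_iff₀ heps, mul_inv_le_iff₀ hTl, mul_comm eps]

theorem levelCount_le_mul_log_inv (hc : 0 < c) (hxi0 : 0 < xi0) (heps : 0 < eps)
    (heps1 : eps ≤ Real.exp (-1)) :
    (levelCount alpha c xi0 T eps : ℝ) ≤
      (1 / (alpha * Real.log T) + max 0 (Real.log (c * xi0 ^ alpha) / (alpha * Real.log T)) + 1) *
        Real.log eps⁻¹ := by
  have hlog : 1 ≤ Real.log eps⁻¹ := one_le_log_inv heps heps1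
  set D := alpha * Real.log T
  set B := Real.log (c * xi0 ^ alpha) / D
  calc (levelCount alpha c xi0 T eps : ℝ)
      ≤ Real.log (c * xi0 ^ alpha * eps⁻¹) / D + 1 := (Int.ceil_lt_add_one _).le
    _ = 1 / D * Real.log eps⁻¹ + B + 1 := by
        rw [Real.log_mul (by positivity) (by positivity)]
        ring
    _ ≤ 1 / D * Real.log eps⁻¹ + max 0 B * Real.log eps⁻¹ + 1 * Real.log eps⁻¹ := by
        gcongr
        · exact (le_max_right 0 B).trans (le_mul_of_one_le_right (le_max_left 0 B) hlog)
        · rwa [one_mul]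
    _ = (1 / D + max 0 B + 1) * Real.log eps⁻¹ := by ring

theorem fidelity_levelCount_rpow_neg_le {beta : ℝ} (halpha : 0 < alpha) (hbeta : 0 ≤ beta)
    (hc : 0 < c) (hxi0 : 0 < xi0) (hT : 1 < T) (heps : 0 < eps) :
    fidelity xi0 T (levelCount alpha c xi0 T eps) ^ (-beta) ≤
      c ^ (beta / alpha) * T ^ beta * eps ^ (-(beta / alpha)) := by
  have hT0 : 0 < T := by linarith
  set L := levelCount alpha c xi0 T eps
  set x := fidelity xi0 T (L - 1)
  have hx : 0 < x := fidelity_pos hxi0 hT0 _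
  have heps_lt : eps < c * x ^ alpha :=
    not_le.1 fun h => absurd ((levelCount_le_iff halpha hc hxi0 hT heps).2 h) (by lia)
  have hx_rpow : x ^ (-beta) ≤ c ^ (beta / alpha) * eps ^ (-(beta / alpha)) :=
    calc x ^ (-beta) = (x ^ alpha) ^ (-(beta / alpha)) := by
          rw [← Real.rpow_mul hx.le, mul_neg, mul_div_cancel₀ _ halpha.ne']
      _ ≤ (eps / c) ^ (-(beta / alpha)) :=
          Real.rpow_le_rpow_of_nonpos (by positivity) ((div_le_iff₀' hc).2 heps_lt.le)
            (neg_nonpos.2 (by positivity))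
      _ = c ^ (beta / alpha) * eps ^ (-(beta / alpha)) := by
          rw [Real.div_rpow heps.le hc.le, Real.rpow_neg hc.le, div_inv_eq_mul, mul_comm]
  calc fidelity xi0 T L ^ (-beta) = T ^ beta * x ^ (-beta) :=
        fidelity_rpow_neg_eq_mul_sub_one hxi0.le hT0 L beta
    _ ≤ T ^ beta * (c ^ (beta / alpha) * eps ^ (-(beta / alpha))) := by gcongr
    _ = c ^ (beta / alpha) * T ^ beta * eps ^ (-(beta / alpha)) := by ring

theorem sum_fidelity_rpow_neg_levelCount_le {beta : ℝ} (halpha : 0 < alpha) (hbeta : 0 < beta)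
    (hc : 0 < c) (hxi0 : 0 < xi0) (hT : 1 < T) (heps : 0 < eps) (m : ℤ) :
    ∑ l ∈ Finset.Icc m (levelCount alpha c xi0 T eps), fidelity xi0 T l ^ (-beta) ≤
      c ^ (beta / alpha) * T ^ beta * (1 - T ^ (-beta))⁻¹ * eps ^ (-(beta / alpha)) := by
  have hgap : 0 ≤ (1 - T ^ (-beta))⁻¹ := inv_one_sub_rpow_neg_nonneg hT.le hbeta.le
  refine (sum_fidelity_rpow_neg_le hxi0.le hT hbeta m _).trans ?_
  calc _ ≤ c ^ (beta / alpha) * T ^ beta * eps ^ (-(beta / alpha)) * (1 - T ^ (-beta))⁻¹ := by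
        gcongr
        exact fidelity_levelCount_rpow_neg_le halpha hbeta.le hc hxi0 hT heps
    _ = _ := by ring

end LevelCount

theorem sum_ceil_mul_fidelity_rpow_le {xi0 T : ℝ} (hxi0 : 0 < xi0) (hT : 0 < T) (A s : ℝ)
    (m L : ℤ) :
    ∑ l ∈ Finset.Icc m L, (⌈A * fidelity xi0 T l ^ s⌉ : ℝ) * fidelity xi0 T l ^ (-s) ≤
      ∑ _l ∈ Finset.Icc m L, A + ∑ l ∈ Finset.Icc m L, fidelity xi0 T l ^ (-s) := by
  rw [← Finset.sum_add_distrib]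
  exact Finset.sum_le_sum fun l _ =>
    ceil_mul_rpow_mul_rpow_neg_le (fidelity_pos hxi0 hT l) A s

theorem sum_Icc_one_two_mul_inv_mul_rpow_le {c p eps C lam : ℝ} {L : ℤ} (hc : 0 ≤ c)
    (hp : 0 ≤ p) (heps : 0 ≤ eps) (hC : 0 ≤ C) (hlam : 0 ≤ lam) (hL : (L : ℝ) ≤ C * lam) :
    ∑ _l ∈ Finset.Icc 1 L, (2 * (L : ℝ) * eps⁻¹ * c) ^ p ≤
      (2 * c) ^ p * C ^ (1 + p) * (eps ^ (-p) * lam ^ (1 + p)) := by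
  calc ∑ _l ∈ Finset.Icc 1 L, (2 * (L : ℝ) * eps⁻¹ * c) ^ p
      = ∑ _l ∈ Finset.Icc 1 L, (2 * c * eps⁻¹ * L) ^ p := by ring_nf
    _ ≤ (2 * c * eps⁻¹) ^ p * (C * lam) ^ (1 + p) :=
        sum_Icc_one_mul_rpow_le (by positivity) hp (by positivity) hL
    _ = (2 * c) ^ p * C ^ (1 + p) * (eps ^ (-p) * lam ^ (1 + p)) := by
        rw [Real.mul_rpow (by positivity) (by positivity), Real.mul_rpow hC hlam,
          Real.inv_rpow heps, ← Real.rpow_neg heps]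
        ring

theorem stmt7_general {alpha beta p c1 c4 c6 xi0 eps T : ℝ} (ha : 0 < alpha) (hb : 0 < beta)
    (hp : beta / alpha ≤ p) (hc1 : 0 < c1) (hc4 : 0 ≤ c4) (hc6 : 0 ≤ c6) (hxi0 : 0 < xi0)
    (hT : 1 < T) (heps0 : 0 < eps) (heps1 : eps ≤ Real.exp (-1)) {L : ℤ}
    (hL : L = levelCount alpha (2 * c1) xi0 T eps) {n : ℤ → ℤ}
    (hn : ∀ l ∈ Finset.Icc 1 L,
      n l = ⌈(2 * (L : ℝ) * eps⁻¹ * c6) ^ p * fidelity xi0 T l ^ beta⌉)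
    {c5 c7 : ℝ}
    (hc7 : c7 = 1 / (alpha * Real.log T) +
      max 0 (Real.log (2 * c1 * xi0 ^ alpha) / (alpha * Real.log T)) + 1)
    (hc5 : c5 = c4 * (2 * c6) ^ p * c7 ^ (1 + p) +
      c4 * (2 : ℝ) ^ (beta / alpha) * c1 ^ (beta / alpha) * T ^ beta * (1 - T ^ (-beta))⁻¹) :
    c4 * ∑ l ∈ Finset.Icc 1 L, (n l : ℝ) * fidelity xi0 T l ^ (-beta) ≤
      c5 * eps ^ (-p) * Real.log eps⁻¹ ^ (1 + p) := by
  have hlog : 1 ≤ Real.log eps⁻¹ := one_le_log_inv heps0 heps1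
  have hp0 : 0 ≤ p := (by positivity : 0 ≤ beta / alpha).trans hp
  have hlogT : 0 < Real.log T := Real.log_pos hT
  have hc7_nonneg : 0 ≤ c7 := by rw [hc7]; positivity
  have hL_le : (L : ℝ) ≤ c7 * Real.log eps⁻¹ := by
    rw [hL, hc7]
    exact levelCount_le_mul_log_inv (by positivity) hxi0 heps0 heps1
  have hgap : 0 ≤ (1 - T ^ (-beta))⁻¹ := inv_one_sub_rpow_neg_nonneg hT.le hb.le
  set R := eps ^ (-p) * Real.log eps⁻¹ ^ (1 + p) with hR
  have hsample : ∑ _l ∈ Finset.Icc 1 L, (2 * (L : ℝ) * eps⁻¹ * c6) ^ p ≤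
      (2 * c6) ^ p * c7 ^ (1 + p) * R :=
    sum_Icc_one_two_mul_inv_mul_rpow_le hc6 hp0 heps0.le hc7_nonneg (by linarith) hL_le
  have hround : ∑ l ∈ Finset.Icc 1 L, fidelity xi0 T l ^ (-beta) ≤
      (2 * c1) ^ (beta / alpha) * T ^ beta * (1 - T ^ (-beta))⁻¹ * R := by
    rw [hL]
    refine (sum_fidelity_rpow_neg_levelCount_le ha hb (by positivity) hxi0 hT heps0 1).trans ?_
    gcongr
    exact rpow_neg_le_rpow_neg_mul_log_inv_rpow heps0 heps1 hp (by positivity)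
  calc c4 * ∑ l ∈ Finset.Icc 1 L, (n l : ℝ) * fidelity xi0 T l ^ (-beta)
      = c4 * ∑ l ∈ Finset.Icc 1 L,
          (⌈(2 * (L : ℝ) * eps⁻¹ * c6) ^ p * fidelity xi0 T l ^ beta⌉ : ℝ) *
            fidelity xi0 T l ^ (-beta) := by
        rw [Finset.sum_congr rfl fun l hl => by rw [hn l hl]]
    _ ≤ c4 * ((2 * c6) ^ p * c7 ^ (1 + p) * R +
          (2 * c1) ^ (beta / alpha) * T ^ beta * (1 - T ^ (-beta))⁻¹ * R) := by
        gcongr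
        exact (sum_ceil_mul_fidelity_rpow_le hxi0 (by linarith) _ beta 1 L).trans
          (add_le_add hsample hround)
    _ = c5 * eps ^ (-p) * Real.log eps⁻¹ ^ (1 + p) := by
        rw [hc5, hR, Real.mul_rpow zero_le_two hc1.le]
        ring

/-- Total cost bound in the boundary case `αd = 2βν` of the cost
complexity theorem:
`c4 ∑_{l=1}^L n_l ξ_l^{-β} ≤ c5 ε^{-d/ν} (log ε⁻¹)^{1+d/ν}`. -/
theorem stmt7 (alpha beta nu d c1 c4 c6 xi0 eps : ℝ) (T : ℤ)
    (ha : 0 < alpha) (hb : 0 < beta) (hnu : 0 < nu) (hd : 0 < d)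
    (hc1 : 0 < c1) (hc4 : 0 < c4) (hc6 : 0 < c6) (hxi0 : 0 < xi0)
    (heq : alpha * d = 2 * beta * nu) (hT : 2 ≤ T)
    (heps0 : 0 < eps) (heps1 : eps < Real.exp (-1))
    (heps2 : eps ≤ 2 * c1 * xi0 ^ alpha * (T : ℝ) ^ (-alpha))
    (L : ℤ)
    (hL : L = ⌈Real.log (2 * c1 * xi0 ^ alpha * eps⁻¹) / (alpha * Real.log (T : ℝ))⌉)
    (n : ℤ → ℤ)
    (hn : ∀ l ∈ Finset.Icc (1 : ℤ) L,
      n l = ⌈(2 * (L : ℝ) * eps⁻¹ * c6) ^ (d / nu) * (xi0 * (T : ℝ) ^ (-(l : ℝ))) ^ beta⌉)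
    (c5 c7 : ℝ)
    (hc7 : c7 = 1 / (alpha * Real.log (T : ℝ)) +
      max 0 (Real.log (2 * c1 * xi0 ^ alpha) / (alpha * Real.log (T : ℝ))) + 1)
    (hc5 : c5 = c4 * (2 * c6) ^ (d / nu) * c7 ^ (1 + d / nu) +
      c4 * (2 : ℝ) ^ (beta / alpha) * c1 ^ (beta / alpha) * (T : ℝ) ^ beta *
        (1 - (T : ℝ) ^ (-beta))⁻¹) :
    c4 * ∑ l ∈ Finset.Icc (1 : ℤ) L, (n l : ℝ) * (xi0 * (T : ℝ) ^ (-(l : ℝ))) ^ (-beta)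
      ≤ c5 * eps ^ (-(d / nu)) * (Real.log eps⁻¹) ^ (1 + d / nu) := by
  have hp : beta / alpha ≤ d / nu := (div_le_div_iff₀ ha hnu).2 (by nlinarith [mul_pos hb hnu])
  exact stmt7_general ha hb hp hc1 hc4.le hc6.le hxi0 (by exact_mod_cast hT) heps0 heps1.le hL hn
    hc7 hc5
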